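/- Existence of small-amplitude periodic traveling waves (Proposition 2.1, case b = 0, large surface tension): let g, d, T > 0 with τ = T/(gd²) ≥ 1/3 and let k > 0. Then there exist ε > 0, C > 0 and, for each a ∈ (−ε, ε), a smooth, even, real-valued, 2π-periodic function w_a and a speed c_a ∈ ℝ such that: (i) the steady Whitham equation M_k w_a − c_a·w_a + w_a² = 0 holds in the Fourier sense (for every n ∈ ℤ, m(kn)·(ŵ_a)_n − c_a·(ŵ_a)_n + (w_a²)^_n = 0); (ii) w_a is nonconstant for a ≠ 0; (iii) sup_z |w_a(z) − a·cos(z) − (a²/2)(1/(m(k) − m(0)) + cos(2z)/(m(k) − m(2k)))| ≤ C|a|³; and (iv) |c_a − m(k) − a²(1/(m(k) − m(0)) + 1/(2(m(k) − m(2k))))| ≤ C|a|³. -/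

import Mathlib

open Real Filter

/-- The capillary Whitham symbol `m(z) = √(gd(1 + τ z²) tanh z / z)`, `m(0) = √(gd)`,
with `τ = T/(g d²)`. -/
noncomputable def mW (g d T : ℝ) (z : ℝ) : ℝ :=
  if z = 0 then Real.sqrt (g * d)
  else Real.sqrt (g * d * (1 + T / (g * d ^ 2) * z ^ 2) * Real.tanh z / z)

/-- The `n`-th Fourier coefficient of a real-valued `2π`-periodic function. -/
noncomputable def fcoef (f : ℝ → ℝ) (n : ℤ) : ℂ :=
  (1 / (2 * Real.pi)) *
    ∫ z in (-Real.pi)..Real.pi, Complex.exp (-(n : ℂ) * (z : ℂ) * Complex.I) * (f z : ℂ)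

/-!
For `τ ≥ 1/3` the symbol increases strictly on `[0, ∞)`, so among the modes `k n`, `n ≥ 0`, only
`n = 1` is resonant with the speed `m k`. Writing the wave as `a (cos z + u)` with `u` free of the
mode `cos z`, the mode `n = 1` fixes the speed and the other modes become a fixed point equation
`u = a L (q - s u)`, where `q` is the square of `cos z + u`, `s` its first cosine coefficient and
`L` the bounded reduced resolvent. In a Banach algebra of exponentially decaying cosine series the
right-hand side is smooth in `(a, u)`, so the implicit function theorem gives `u` with its linear
term in `a`, and from it the wave and the speed up to errors of order `a ^ 3`.
-/

open Asymptotics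
open scoped Topology

theorem pos_of_hasDerivAt_of_pos {f f' : ℝ → ℝ} (hf : ∀ x, HasDerivAt f (f' x) x) (hf₀ : f 0 = 0)
    (hf' : ∀ x, 0 < x → 0 < f' x) {x : ℝ} (hx : 0 < x) : 0 < f x := by
  have hmono : StrictMonoOn f (Set.Ici 0) :=
    strictMonoOn_of_hasDerivWithinAt_pos (convex_Ici 0)
      (fun y _ => (hf y).continuousAt.continuousWithinAt) (fun y _ => (hf y).hasDerivWithinAt)
      (fun y hy => hf' y (by simpa using hy))
  simpa [hf₀] using hmono Set.self_mem_Ici hx.le hx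

-- In the Taylor series of the difference the terms of degree at most three cancel and all later
-- coefficients are positive, so four derivatives make the positivity visible.
theorem twelve_sub_sq_mul_sinh_lt {t : ℝ} (ht : 0 < t) :
    (12 - t ^ 2) * sinh t < 12 * t + t ^ 3 := by
  have hid := fun x : ℝ => hasDerivAt_id' x
  have hsq := fun x : ℝ => hasDerivAt_pow 2 x
  have h₃ : ∀ x, 0 < x → 0 < 6 + 6 * x * sinh x + (x ^ 2 - 6) * cosh x := fun x =>
    pos_of_hasDerivAt_of_pos (f' := fun x => 8 * x * cosh x + x ^ 2 * sinh x)
      (fun x => (((((hid x).const_mul 6).mul (hasDerivAt_sinh x)).const_add 6).add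
        (((hsq x).sub_const 6).mul (hasDerivAt_cosh x))).congr_deriv (by simp; ring))
      (by simp)
      (fun x hx => by have := sinh_pos_iff.2 hx; have := cosh_pos x; positivity)
  have h₂ : ∀ x, 0 < x → 0 < 6 * x + 4 * x * cosh x + (x ^ 2 - 10) * sinh x := fun x =>
    pos_of_hasDerivAt_of_pos
      (fun x => ((((hid x).const_mul 6).add (((hid x).const_mul 4).mul (hasDerivAt_cosh x))).add
        (((hsq x).sub_const 10).mul (hasDerivAt_sinh x))).congr_deriv (by simp; ring))
      (by simp) h₃
  have h₁ : ∀ x, 0 < x → 0 < 12 + 3 * x ^ 2 + 2 * x * sinh x + (x ^ 2 - 12) * cosh x := fun x =>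
    pos_of_hasDerivAt_of_pos
      (fun x => (((((hsq x).const_mul 3).const_add 12).add
        (((hid x).const_mul 2).mul (hasDerivAt_sinh x))).add
        (((hsq x).sub_const 12).mul (hasDerivAt_cosh x))).congr_deriv (by simp; ring))
      (by simp) h₂
  have h₀ : 0 < 12 * t + t ^ 3 + (t ^ 2 - 12) * sinh t :=
    pos_of_hasDerivAt_of_pos
      (fun x => ((((hid x).const_mul 12).add (hasDerivAt_pow 3 x)).add
        (((hsq x).sub_const 12).mul (hasDerivAt_sinh x))).congr_deriv (by simp; ring))
      (by simp) h₁ ht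
  linarith

theorem hasDerivAt_tanh (z : ℝ) : HasDerivAt Real.tanh (1 / cosh z ^ 2) z := by
  have hquot : Real.tanh = sinh / cosh := funext tanh_eq_sinh_div_cosh
  rw [hquot]
  refine ((hasDerivAt_sinh z).div (hasDerivAt_cosh z) (cosh_pos z).ne').congr_deriv ?_
  congr 1
  linear_combination cosh_sq_sub_sinh_sq z

theorem dslope_tanh_zero_of_ne {z : ℝ} (hz : z ≠ 0) : dslope Real.tanh 0 z = Real.tanh z / z := by
  simp [dslope_of_ne _ hz, slope_def_field]

theorem deriv_tanh_zero : deriv Real.tanh 0 = 1 := by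
  simp [(hasDerivAt_tanh 0).deriv]

theorem continuous_dslope_tanh_zero : Continuous (dslope Real.tanh 0) := by
  have hdiff : Differentiable ℝ Real.tanh := fun z => (hasDerivAt_tanh z).differentiableAt
  exact continuousOn_univ.1
    ((continuousOn_dslope univ_mem).2 ⟨hdiff.continuous.continuousOn, hdiff 0⟩)

theorem hasDerivAt_one_add_mul_sq_mul_dslope_tanh (τ : ℝ) {z : ℝ} (hz : z ≠ 0) :
    HasDerivAt (fun z => (1 + τ * z ^ 2) * dslope Real.tanh 0 z)
      ((z + τ * z ^ 3 + (τ * z ^ 2 - 1) * (sinh z * cosh z)) / (z * cosh z) ^ 2) z := by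
  have hquot : dslope Real.tanh 0 =ᶠ[𝓝 z] fun z => Real.tanh z / z := by
    filter_upwards [isOpen_ne.mem_nhds hz] with y hy using dslope_tanh_zero_of_ne hy
  have hdslope := ((hasDerivAt_tanh z).div (hasDerivAt_id' z) hz).congr_of_eventuallyEq hquot
  refine ((((hasDerivAt_pow 2 z).const_mul τ).const_add 1).mul hdslope).congr_deriv ?_
  have hcosh := (cosh_pos z).ne'
  rw [dslope_tanh_zero_of_ne hz, tanh_eq_sinh_div_cosh]
  field_simp
  ring

theorem strictMonoOn_one_add_mul_sq_mul_dslope_tanh {τ : ℝ} (hτ : 1 / 3 ≤ τ) :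
    StrictMonoOn (fun z => (1 + τ * z ^ 2) * dslope Real.tanh 0 z) (Set.Ici 0) := by
  have hcont : Continuous fun z => (1 + τ * z ^ 2) * dslope Real.tanh 0 z :=
    (by fun_prop : Continuous fun z : ℝ => 1 + τ * z ^ 2).mul continuous_dslope_tanh_zero
  refine strictMonoOn_of_hasDerivWithinAt_pos (convex_Ici 0) hcont.continuousOn
    (fun z hz => (hasDerivAt_one_add_mul_sq_mul_dslope_tanh τ ?_).hasDerivWithinAt) fun z hz => ?_
  all_goals rw [interior_Ici] at hz
  · exact (Set.mem_Ioi.1 hz).ne'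
  have hz : 0 < z := hz
  have := sinh_pos_iff.2 hz
  have := cosh_pos z
  refine div_pos ?_ (by positivity)
  have hthird := twelve_sub_sq_mul_sinh_lt (mul_pos two_pos hz)
  rw [sinh_two_mul] at hthird
  have hrest : 0 ≤ (τ - 1 / 3) * (z ^ 3 + z ^ 2 * (sinh z * cosh z)) :=
    mul_nonneg (by linarith) (by positivity)
  linarith

section Symbol

variable (g d T : ℝ)

theorem mW_eq_sqrt_dslope (z : ℝ) :
    mW g d T z = √(g * d * ((1 + T / (g * d ^ 2) * z ^ 2) * dslope Real.tanh 0 z)) := by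
  rcases eq_or_ne z 0 with rfl | hz
  · simp [mW, deriv_tanh_zero]
  · rw [mW, if_neg hz, dslope_tanh_zero_of_ne hz]
    ring_nf

theorem mW_even : Function.Even (mW g d T) := fun z => by
  simp only [mW, neg_eq_zero, tanh_neg, neg_sq, mul_neg, neg_div_neg_eq]

variable {g d T}

theorem strictMonoOn_mW (hg : 0 < g) (hd : 0 < d) (hτ : 1 / 3 ≤ T / (g * d ^ 2)) :
    StrictMonoOn (mW g d T) (Set.Ici 0) := by
  have hmono := strictMonoOn_one_add_mul_sq_mul_dslope_tanh hτ
  intro x hx y hy hxy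
  rw [mW_eq_sqrt_dslope, mW_eq_sqrt_dslope]
  have hlt := mul_lt_mul_of_pos_left (hmono hx hy hxy) (mul_pos hg hd)
  refine sqrt_lt_sqrt (mul_nonneg (by positivity) ?_) hlt
  calc (0 : ℝ) ≤ (1 + T / (g * d ^ 2) * 0 ^ 2) * dslope Real.tanh 0 0 := by
        simp [deriv_tanh_zero]
    _ ≤ _ := hmono.monotoneOn Set.self_mem_Ici hx hx

end Symbol

theorem exists_gap_of_strictMono {μ : ℕ → ℝ} (hμ : StrictMono μ) (i : ℕ) :
    ∃ δ > 0, ∀ n, n ≠ i + 1 → δ ≤ |μ n - μ (i + 1)| := by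
  have hbelow : μ i < μ (i + 1) := hμ i.lt_succ_self
  have habove : μ (i + 1) < μ (i + 2) := hμ (i + 1).lt_succ_self
  refine ⟨min (μ (i + 1) - μ i) (μ (i + 2) - μ (i + 1)),
    lt_min (sub_pos.2 hbelow) (sub_pos.2 habove), fun n hn => ?_⟩
  rcases Nat.lt_or_gt_of_ne hn with hn | hn
  · calc _ ≤ μ (i + 1) - μ i := min_le_left _ _
      _ ≤ μ (i + 1) - μ n := sub_le_sub_left (hμ.monotone (Nat.lt_succ_iff.1 hn)) _
      _ ≤ |μ n - μ (i + 1)| := abs_sub_comm (μ n) _ ▸ le_abs_self _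
  · calc _ ≤ μ (i + 2) - μ (i + 1) := min_le_right _ _
      _ ≤ μ n - μ (i + 1) := sub_le_sub_right (hμ.monotone hn) _
      _ ≤ |μ n - μ (i + 1)| := le_abs_self _

section Bifurcation

variable {E : Type*} [NormedAddCommGroup E] [NormedSpace ℝ E] [CompleteSpace E]

theorem exists_eventually_eq_smul_map {G : E → E} {G' : E →L[ℝ] E}
    (hG : HasStrictFDerivAt G G' 0) :
    ∃ u : ℝ → E, (∀ᶠ a in 𝓝 0, u a = a • G (u a)) ∧ u =O[𝓝 0] (fun a => a) ∧
      (fun a => u a - a • G 0) =O[𝓝 0] (fun a => a ^ 2) := by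
  let F : ℝ × E → E := fun p => p.2 - p.1 • G p.2
  have hF : HasStrictFDerivAt F (.snd ℝ ℝ E - (ContinuousLinearMap.fst ℝ ℝ E).smulRight (G 0))
      (0, 0) := by
    have hcomp : HasStrictFDerivAt (fun p : ℝ × E => G p.2) (G' ∘L .snd ℝ ℝ E) (0, 0) :=
      hG.comp (0, 0) hasStrictFDerivAt_snd
    refine (hasStrictFDerivAt_snd.sub (hasStrictFDerivAt_fst.smul hcomp)).congr_fderiv ?_
    ext <;> simp
  have hinv : ((.snd ℝ ℝ E - (ContinuousLinearMap.fst ℝ ℝ E).smulRight (G 0)) ∘L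
      .inr ℝ ℝ E).IsInvertible := by
    convert ContinuousLinearMap.isInvertible_equiv (f := ContinuousLinearEquiv.refl ℝ E)
    ext
    simp
  let u := hF.implicitFunctionOfProdDomain hinv
  have hfix : ∀ᶠ a in 𝓝 0, u a = a • G (u a) := by
    filter_upwards [hF.eventually_apply_implicitFunctionOfProdDomain hinv] with a ha
    simpa [F, u, sub_eq_zero] using ha
  have hu₀ : u 0 = 0 := by simpa using hfix.self_of_nhds
  have hu : u =O[𝓝 0] fun a => a := by
    have hsub : (fun a => u a - u 0) =O[𝓝 0] fun a => a - 0 :=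
      (hF.hasStrictFDerivAt_implicitFunctionOfProdDomain hinv).hasFDerivAt.isBigO_sub
    simpa [hu₀] using hsub
  have hGu : (fun a => G (u a) - G 0) =O[𝓝 0] fun a => a := by
    have hlip : (fun x => G x - G 0) =O[𝓝 0] fun x => x := by
      simpa using hG.hasFDerivAt.isBigO_sub
    exact (hlip.comp_tendsto (hF.tendsto_implicitFunctionOfProdDomain hinv)).trans hu
  refine ⟨u, hfix, hu, ?_⟩
  refine ((isBigO_refl (fun a : ℝ => a) (𝓝 0)).smul hGu).congr' ?_ (by simp [sq])
  filter_upwards [hfix] with a ha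
  rw [smul_sub, ← ha]

-- Lyapunov–Schmidt reduction: with `L` the inverse of the linear part off the critical mode `e`,
-- and `ℓ` the coordinate along `e`, the wave `a • (e + u a)` solves the quadratic equation at the
-- speed shifted by `a * ℓ (B (e + u a) (e + u a))`.
theorem exists_bifurcation_branch (B : E →L[ℝ] E →L[ℝ] E) (L : E →L[ℝ] E) (ℓ : E →L[ℝ] ℝ) {e : E}
    (he : ℓ (B e e) = 0) :
    ∃ u : ℝ → E,
      (∀ᶠ a in 𝓝 0, u a =
        a • L (B (e + u a) (e + u a) - ℓ (B (e + u a) (e + u a)) • u a)) ∧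
      (fun a => u a - a • L (B e e)) =O[𝓝 0] (fun a => a ^ 2) ∧
      (fun a => ℓ (B (e + u a) (e + u a)) - a * ℓ (B e (L (B e e)) + B (L (B e e)) e))
        =O[𝓝 0] (fun a => a ^ 2) := by
  let Q : E → E := fun u => B (e + u) (e + u)
  have hQ : ContDiff ℝ 1 Q :=
    (B.contDiff.comp (contDiff_const.add contDiff_id)).clm_apply (contDiff_const.add contDiff_id)
  have hG : ContDiff ℝ 1 fun u => L (Q u - ℓ (Q u) • u) :=
    L.contDiff.comp (hQ.sub ((ℓ.contDiff.comp hQ).smul contDiff_id))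
  obtain ⟨u, hfix, hu, hu₂⟩ :=
    exists_eventually_eq_smul_map (hG.contDiffAt.hasStrictFDerivAt one_ne_zero)
  have hu₂ : (fun a => u a - a • L (B e e)) =O[𝓝 0] fun a => a ^ 2 := by
    simpa [Q] using hu₂
  refine ⟨u, hfix, hu₂, ?_⟩
  have hlin := ((ℓ ∘L (B e + B.flip e)).isBigO_comp _ _).trans hu₂
  have hquad : (fun a => ℓ (B (u a) (u a))) =O[𝓝 0] fun a => a ^ 2 := by
    have hB := (B.isBoundedBilinearMap.isBigO_comp (g := u) (h := u) (l := 𝓝 0)).trans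
      (hu.norm_left.mul hu.norm_left)
    simpa only [sq] using (ℓ.isBigO_comp _ _).trans hB
  refine (hlin.add hquad).congr_left fun a => ?_
  simp only [ContinuousLinearMap.comp_apply, ContinuousLinearMap.flip_apply, add_apply, map_add,
    map_sub, map_smul, smul_eq_mul, he, ContinuousLinearMap.comp_add]
  ring

end Bifurcation

/-- The Banach space of cosine series `∑ cₙ cos (n z)` with `∑ 2ⁿ |cₙ| < ∞`. The point `u` of `ℓ¹`
stands for the series with `cₙ = u n / 2ⁿ`; the exponential weight makes every such series smooth
while keeping the space closed under products. -/
abbrev CosineSeries := lp (fun _ : ℕ => ℝ) 1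

namespace CosineSeries

/-- The `n`-th cosine coefficient `cₙ`, as a continuous linear functional. -/
noncomputable def coeff (n : ℕ) : CosineSeries →L[ℝ] ℝ :=
  (2 ^ n : ℝ)⁻¹ • lp.evalCLM ℝ (fun _ : ℕ => ℝ) 1 n

/-- The series consisting of the single term `cos (n z)`. -/
noncomputable def harmonic (n : ℕ) : CosineSeries := lp.single 1 n (2 ^ n : ℝ)

theorem coeff_apply (n : ℕ) (u : CosineSeries) : coeff n u = (2 ^ n)⁻¹ * u n := rfl

theorem coeff_harmonic (n m : ℕ) : coeff n (harmonic m) = if n = m then 1 else 0 := by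
  rcases eq_or_ne n m with rfl | h
  · simp [coeff_apply, harmonic]
  · simp [coeff_apply, harmonic, h]

theorem norm_harmonic (n : ℕ) : ‖harmonic n‖ = 2 ^ n := by
  simp [harmonic, lp.norm_single]

theorem hasSum_abs_coeff_mul_two_pow (u : CosineSeries) :
    HasSum (fun n => |coeff n u| * 2 ^ n) ‖u‖ := by
  simpa [coeff_apply, abs_mul, mul_comm, mul_assoc] using lp.hasSum_norm (p := 1) (by simp) u

theorem summable_abs_coeff (u : CosineSeries) : Summable fun n => |coeff n u| :=
  (hasSum_abs_coeff_mul_two_pow u).summable.of_nonneg_of_le (fun _ => abs_nonneg _)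
    fun _ => le_mul_of_one_le_right (abs_nonneg _) (one_le_pow₀ one_le_two)

theorem abs_coeff_le (n : ℕ) (u : CosineSeries) : |coeff n u| ≤ ‖u‖ * (1 / 2) ^ n := by
  rw [one_div, inv_pow, ← div_eq_mul_inv, le_div_iff₀ (by positivity)]
  exact le_hasSum (hasSum_abs_coeff_mul_two_pow u) n fun _ _ => by positivity

section Lift

variable {F : Type*} [NormedAddCommGroup F] [NormedSpace ℝ F]

theorem ext_harmonic {f g : CosineSeries →L[ℝ] F} (h : ∀ n, f (harmonic n) = g (harmonic n)) :
    f = g := by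
  refine lp.ext_continuousLinearMap (by simp) fun n => ?_
  ext
  have hsingle : lp.single 1 n (1 : ℝ) = (2 ^ n : ℝ)⁻¹ • harmonic n := by
    simp [harmonic, ← lp.single_smul]
  simp [hsingle, h]

variable (v : ℕ → F) {C : ℝ} (hv : ∀ n, ‖v n‖ ≤ C * 2 ^ n)

include hv in
theorem norm_coeff_smul_le (u : CosineSeries) (n : ℕ) :
    ‖coeff n u • v n‖ ≤ C * (|coeff n u| * 2 ^ n) := by
  rw [norm_smul, norm_eq_abs, mul_left_comm]
  exact mul_le_mul_of_nonneg_left (hv n) (abs_nonneg _)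

variable [CompleteSpace F]

include hv in
theorem summable_coeff_smul (u : CosineSeries) : Summable fun n => coeff n u • v n :=
  .of_norm_bounded ((hasSum_abs_coeff_mul_two_pow u).summable.mul_left C)
    (norm_coeff_smul_le v hv u)

/-- The continuous linear map `∑ cₙ cos (n z) ↦ ∑ cₙ vₙ`, the unique one taking the `n`-th harmonic
to `vₙ`. -/
noncomputable def lift : CosineSeries →L[ℝ] F :=
  LinearMap.mkContinuous
    { toFun := fun u => ∑' n, coeff n u • v n
      map_add' := fun x y => by
        simp only [map_add, add_smul]
        exact (summable_coeff_smul v hv x).tsum_add (summable_coeff_smul v hv y)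
      map_smul' := fun r x => by
        simp only [map_smul, smul_assoc, RingHom.id_apply]
        exact (summable_coeff_smul v hv x).tsum_const_smul r }
    C fun x => tsum_of_norm_bounded ((hasSum_abs_coeff_mul_two_pow x).mul_left C)
      (norm_coeff_smul_le v hv x)

theorem lift_apply (u : CosineSeries) : lift v hv u = ∑' n, coeff n u • v n := rfl

theorem lift_harmonic (n : ℕ) : lift v hv (harmonic n) = v n := by
  rw [lift_apply, tsum_eq_single n fun m hm => by simp [coeff_harmonic, hm]]
  simp [coeff_harmonic]

theorem norm_lift_le (hC : 0 ≤ C) : ‖lift v hv‖ ≤ C := LinearMap.mkContinuous_norm_le _ hC _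

end Lift

section Eval

theorem norm_cos_nat_mul_le (z : ℝ) (n : ℕ) : ‖cos (n * z)‖ ≤ 1 * 2 ^ n := by
  simpa using (abs_cos_le_one _).trans (one_le_pow₀ one_le_two)

/-- The value of a cosine series at `z`. -/
noncomputable def eval (z : ℝ) : CosineSeries →L[ℝ] ℝ :=
  lift (fun n => cos (n * z)) (norm_cos_nat_mul_le z)

theorem eval_apply (z : ℝ) (u : CosineSeries) : eval z u = ∑' n, coeff n u * cos (n * z) := rfl

theorem eval_harmonic (z : ℝ) (n : ℕ) : eval z (harmonic n) = cos (n * z) := lift_harmonic ..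

theorem abs_eval_le (z : ℝ) (u : CosineSeries) : |eval z u| ≤ ‖u‖ := by
  simpa using (eval z).le_of_opNorm_le (norm_lift_le _ _ zero_le_one) u

theorem even_eval (u : CosineSeries) : Function.Even fun z => eval z u := fun z => by
  simp [eval_apply]

theorem periodic_eval (u : CosineSeries) : Function.Periodic (fun z => eval z u) (2 * π) :=
  fun z => by simp [eval_apply, mul_add, cos_add_nat_mul_two_pi]

theorem contDiff_eval (u : CosineSeries) : ContDiff ℝ (⊤ : ℕ∞) fun z => eval z u := by
  refine contDiff_tsum (v := fun j n : ℕ => ‖u‖ * ((n : ℝ) ^ j * (1 / 2) ^ n))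
    (fun n => by fun_prop) (fun j _ => ?_) fun j n z _ => ?_
  · exact (summable_pow_mul_geometric_of_norm_lt_one j (by norm_num)).mul_left ‖u‖
  · simp only [smul_eq_mul]
    rw [norm_iteratedFDeriv_eq_norm_iteratedDeriv, iteratedDeriv_const_mul_field,
      iteratedDeriv_comp_const_mul contDiff_cos, norm_mul]
    simp only [norm_mul, norm_pow, RCLike.norm_natCast, norm_eq_abs]
    calc |coeff n u| * (n ^ j * |iteratedDeriv j cos (n * z)|)
        ≤ ‖u‖ * (1 / 2) ^ n * (n ^ j * 1) := by
          gcongr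
          exacts [abs_coeff_le n u, abs_iteratedDeriv_cos_le_one j _]
      _ = ‖u‖ * (n ^ j * (1 / 2) ^ n) := by ring

end Eval

section Mul

/-- The cosine series of `cos (m z) cos (n z)`. -/
noncomputable def harmonicMul (m n : ℕ) : CosineSeries :=
  (1 / 2 : ℝ) • (harmonic (m + n) + harmonic (m - n : ℤ).natAbs)

theorem norm_harmonicMul_le (m n : ℕ) : ‖harmonicMul m n‖ ≤ 2 ^ m * 2 ^ n := by
  have hpow : (2 : ℝ) ^ (m - n : ℤ).natAbs ≤ 2 ^ (m + n) :=
    pow_le_pow_right₀ one_le_two (by omega)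
  calc ‖harmonicMul m n‖
      ≤ 1 / 2 * (‖harmonic (m + n)‖ + ‖harmonic (m - n : ℤ).natAbs‖) := by
        rw [harmonicMul, norm_smul, norm_of_nonneg one_half_pos.le]
        exact mul_le_mul_of_nonneg_left (norm_add_le _ _) one_half_pos.le
    _ ≤ 2 ^ (m + n) := by rw [norm_harmonic, norm_harmonic]; linarith
    _ = 2 ^ m * 2 ^ n := pow_add ..

/-- The product of cosine series, as a continuous bilinear map. -/
noncomputable def mul : CosineSeries →L[ℝ] CosineSeries →L[ℝ] CosineSeries :=
  lift (fun m => lift (harmonicMul m) (norm_harmonicMul_le m)) (C := 1)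
    fun m => by simpa using norm_lift_le _ (norm_harmonicMul_le m) (by positivity)

theorem mul_harmonic (m n : ℕ) : mul (harmonic m) (harmonic n) = harmonicMul m n := by
  rw [mul, lift_harmonic, lift_harmonic]

theorem eval_harmonicMul (z : ℝ) (m n : ℕ) :
    eval z (harmonicMul m n) = cos (m * z) * cos (n * z) := by
  have hdiff : cos ((m - n : ℤ).natAbs * z) = cos (m * z - n * z) := by
    rw [← sub_mul, ← cos_abs ((m - n : ℝ) * z), abs_mul, ← cos_abs (_ * z), abs_mul]
    simp [Nat.cast_natAbs]
  have hprod := two_mul_cos_mul_cos (m * z) (n * z)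
  simp only [harmonicMul, map_smul, map_add, eval_harmonic, hdiff, smul_eq_mul, Nat.cast_add,
    add_mul]
  linarith

theorem eval_mul (z : ℝ) (u v : CosineSeries) : eval z (mul u v) = eval z u * eval z v := by
  have hbilin : (eval z).postcomp CosineSeries ∘L mul = (eval z).smulRight (eval z) := by
    refine ext_harmonic fun m => ext_harmonic fun n => ?_
    simp [mul_harmonic, eval_harmonicMul, eval_harmonic]
  simpa using congr($hbilin u v)

end Mul

section Multiplier

variable (c : ℕ → ℝ) {C : ℝ} (hc : ∀ n, |c n| ≤ C)

include hc in
theorem norm_smul_harmonic_le (n : ℕ) : ‖c n • harmonic n‖ ≤ C * 2 ^ n := by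
  rw [norm_smul, norm_harmonic]
  exact mul_le_mul_of_nonneg_right (hc n) (by positivity)

/-- The Fourier multiplier scaling the `n`-th harmonic by `c n`. -/
noncomputable def multiplier : CosineSeries →L[ℝ] CosineSeries :=
  lift (fun n => c n • harmonic n) (norm_smul_harmonic_le c hc)

theorem multiplier_harmonic (n : ℕ) : multiplier c hc (harmonic n) = c n • harmonic n :=
  lift_harmonic ..

theorem coeff_multiplier (n : ℕ) (u : CosineSeries) :
    coeff n (multiplier c hc u) = c n * coeff n u := by
  have hcomp : coeff n ∘L multiplier c hc = c n • coeff n := by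
    refine ext_harmonic fun m => ?_
    rcases eq_or_ne n m with rfl | h
    · simp [multiplier_harmonic]
    · simp [multiplier_harmonic, coeff_harmonic, h]
  exact congr($hcomp u)

end Multiplier

end CosineSeries

section FourierCoefficient

theorem integral_cexp_int_mul (j : ℤ) :
    ∫ z in (-π)..π, Complex.exp (j * z * Complex.I) = if j = 0 then 2 * (π : ℂ) else 0 := by
  split_ifs with hj
  · simp [hj, two_mul]
  · have hne : (j : ℂ) * Complex.I ≠ 0 := mul_ne_zero (mod_cast hj) Complex.I_ne_zero
    have hperiodic : Complex.exp (j * Complex.I * π) = Complex.exp (j * Complex.I * (-π : ℝ)) :=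
      Complex.exp_eq_exp_iff_exists_int.2 ⟨j, by push_cast; ring⟩
    simp_rw [mul_right_comm (j : ℂ)]
    rw [integral_exp_mul_complex hne, hperiodic, sub_self, zero_div]

theorem fcoef_cos_int_mul (m n : ℤ) :
    fcoef (fun z => cos (m * z)) n =
      ((if n = m then 1 else 0) + (if n = -m then 1 else 0)) / 2 := by
  have hexp (z : ℝ) : Complex.exp (-(n : ℂ) * z * Complex.I) * (cos (m * z) : ℝ) =
      1 / 2 * (Complex.exp ((m - n : ℤ) * z * Complex.I) +
        Complex.exp ((-m - n : ℤ) * z * Complex.I)) := by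
    rw [Complex.ofReal_cos, Complex.cos, mul_div_assoc', mul_add, ← Complex.exp_add,
      ← Complex.exp_add]
    push_cast
    ring_nf
  have hint (j : ℤ) :
      IntervalIntegrable (fun z : ℝ => Complex.exp (j * z * Complex.I)) MeasureTheory.volume
        (-π) π :=
    Continuous.intervalIntegrable (by fun_prop) _ _
  have hpi : (π : ℂ) ≠ 0 := mod_cast pi_ne_zero
  simp_rw [fcoef, hexp]
  rw [intervalIntegral.integral_const_mul, intervalIntegral.integral_add (hint _) (hint _),
    integral_cexp_int_mul, integral_cexp_int_mul]
  simp only [sub_eq_zero, eq_comm (b := n)]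
  split_ifs <;> field_simp <;> ring

theorem fcoef_const_mul (c : ℝ) (f : ℝ → ℝ) (n : ℤ) :
    fcoef (fun z => c * f z) n = c * fcoef f n := by
  simp_rw [fcoef, Complex.ofReal_mul, mul_left_comm _ (c : ℂ),
    intervalIntegral.integral_const_mul]
  ring

theorem hasSum_fcoef {ι : Type*} [Countable ι] {f : ι → ℝ → ℝ} (hf : ∀ i, Continuous (f i))
    {b : ι → ℝ} (hb : Summable b) (hfb : ∀ i z, |f i z| ≤ b i) (n : ℤ) :
    HasSum (fun i => fcoef (f i) n) (fcoef (fun z => ∑' i, f i z) n) := by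
  refine HasSum.mul_left _ (intervalIntegral.hasSum_integral_of_dominated_convergence
    (fun i _ => b i) (fun i => ?_) (fun i => .of_forall fun z _ => ?_) (.of_forall fun _ _ => hb)
    intervalIntegrable_const (.of_forall fun z _ => ?_))
  · exact Continuous.aestronglyMeasurable (by fun_prop)
  · rw [norm_mul, ← Complex.ofReal_intCast, ← Complex.ofReal_neg, ← Complex.ofReal_mul,
      Complex.norm_exp_ofReal_mul_I, one_mul, Complex.norm_real]
    exact hfb i z
  · have hsum : Summable fun i => f i z := hb.of_norm_bounded fun i => hfb i z
    exact (Complex.hasSum_ofReal.2 hsum.hasSum).mul_left _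

end FourierCoefficient

namespace CosineSeries

theorem fcoef_eval (u : CosineSeries) (n : ℤ) :
    fcoef (fun z => eval z u) n = (if n = 0 then 1 else 1 / 2 : ℂ) * coeff n.natAbs u := by
  have hbound (i : ℕ) (z : ℝ) : |coeff i u * cos (i * z)| ≤ |coeff i u| := by
    rw [abs_mul]
    exact mul_le_of_le_one_right (abs_nonneg _) (abs_cos_le_one _)
  have hsum := hasSum_fcoef (fun i => by fun_prop) (summable_abs_coeff u) hbound n
  have hterm (i : ℕ) : fcoef (fun z => coeff i u * cos (i * z)) n =
      if i = n.natAbs then (if n = 0 then 1 else 1 / 2 : ℂ) * coeff n.natAbs u else 0 := by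
    have hcos := fcoef_cos_int_mul i n
    simp only [Int.cast_natCast] at hcos
    rw [fcoef_const_mul, hcos]
    grind
  simp_rw [hterm] at hsum
  exact hsum.unique (hasSum_ite_eq _ _)

theorem coeff_eq_of_eval_eq {u v : CosineSeries} (h : ∀ z, eval z u = eval z v) (n : ℕ) :
    coeff n u = coeff n v := by
  have hfcoef := fcoef_eval u n
  simp_rw [h, fcoef_eval, Int.natAbs_natCast] at hfcoef
  exact_mod_cast (mul_left_cancel₀ (by split_ifs <;> norm_num) hfcoef).symm

section Branch

variable {μ : ℕ → ℝ} {δ : ℝ} (hδ : 0 < δ) (hgap : ∀ n, n ≠ 1 → δ ≤ |μ n - μ 1|)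

include hδ hgap in
theorem abs_inv_sub_le (n : ℕ) : |(μ 1 - μ n)⁻¹| ≤ δ⁻¹ := by
  rcases eq_or_ne n 1 with rfl | hn
  · simpa using hδ.le
  · rw [abs_inv, abs_sub_comm]
    exact inv_anti₀ hδ (hgap n hn)

/-- The reduced resolvent at `μ 1` of the Fourier multiplier with symbol `μ`. It vanishes on the
critical mode `n = 1`, where the factor is `0⁻¹ = 0`. -/
noncomputable def reducedResolvent : CosineSeries →L[ℝ] CosineSeries :=
  multiplier (fun n => (μ 1 - μ n)⁻¹) (abs_inv_sub_le hδ hgap)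

theorem coeff_reducedResolvent (n : ℕ) (u : CosineSeries) :
    coeff n (reducedResolvent hδ hgap u) = (μ 1 - μ n)⁻¹ * coeff n u :=
  coeff_multiplier ..

theorem reducedResolvent_mul_harmonic_one :
    reducedResolvent hδ hgap (mul (harmonic 1) (harmonic 1)) =
      (1 / 2 : ℝ) • ((μ 1 - μ 0)⁻¹ • harmonic 0 + (μ 1 - μ 2)⁻¹ • harmonic 2) := by
  simp [reducedResolvent, mul_harmonic, harmonicMul, multiplier_harmonic, add_comm]

theorem coeff_one_mul_reducedResolvent_add :
    coeff 1 (mul (harmonic 1) (reducedResolvent hδ hgap (mul (harmonic 1) (harmonic 1))) +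
      mul (reducedResolvent hδ hgap (mul (harmonic 1) (harmonic 1))) (harmonic 1)) =
        (μ 1 - μ 0)⁻¹ + (μ 1 - μ 2)⁻¹ / 2 := by
  rw [reducedResolvent_mul_harmonic_one]
  simp [mul_harmonic, harmonicMul, coeff_harmonic]
  ring

section ModeEquation

variable {hδ hgap} {a s : ℝ} {u q : CosineSeries}
  (hu : u = a • reducedResolvent hδ hgap (q - s • u))

include hu in
theorem coeff_one_eq_zero : coeff 1 u = 0 := by
  rw [hu, map_smul, coeff_reducedResolvent]
  simp

include hu in
theorem mode_equation (hs : s = coeff 1 q) (n : ℕ) :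
    (μ n - (μ 1 + a * s)) * coeff n (harmonic 1 + u) + a * coeff n q = 0 := by
  have hmode : coeff n u = a * ((μ 1 - μ n)⁻¹ * (coeff n q - s * coeff n u)) := by
    conv_lhs => rw [hu, map_smul, coeff_reducedResolvent, map_sub, map_smul]
    simp only [smul_eq_mul]
  rcases eq_or_ne n 1 with rfl | hn
  · simp [coeff_harmonic, coeff_one_eq_zero hu, hs]
  · have hne : μ 1 - μ n ≠ 0 := by
      rw [← abs_pos, abs_sub_comm]
      exact hδ.trans_le (hgap n hn)
    rw [map_add, coeff_harmonic, if_neg hn, zero_add]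
    field_simp at hmode
    linear_combination -hmode

end ModeEquation

include hδ hgap in
theorem exists_travelingWave_branch :
    ∃ U : ℝ → CosineSeries, ∃ c : ℝ → ℝ,
      (∀ᶠ a in 𝓝 0, coeff 1 (U a) = a ∧
        ∀ n, (μ n - c a) * coeff n (U a) + coeff n (mul (U a) (U a)) = 0) ∧
      (fun a => U a - a • harmonic 1 -
        (a ^ 2 / 2) • ((μ 1 - μ 0)⁻¹ • harmonic 0 + (μ 1 - μ 2)⁻¹ • harmonic 2))
          =O[𝓝 0] (fun a => a ^ 3) ∧
      (fun a => c a - μ 1 - a ^ 2 * ((μ 1 - μ 0)⁻¹ + (μ 1 - μ 2)⁻¹ / 2))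
        =O[𝓝 0] (fun a => a ^ 3) := by
  obtain ⟨u, hfix, hu, hspeed⟩ := exists_bifurcation_branch mul (reducedResolvent hδ hgap)
    (coeff 1) (e := harmonic 1) (by simp [mul_harmonic, harmonicMul, coeff_harmonic])
  rw [reducedResolvent_mul_harmonic_one] at hu
  rw [coeff_one_mul_reducedResolvent_add] at hspeed
  have hcube (a : ℝ) : a * a ^ 2 = a ^ 3 := by ring
  refine ⟨fun a => a • (harmonic 1 + u a),
    fun a => μ 1 + a * coeff 1 (mul (harmonic 1 + u a) (harmonic 1 + u a)), ?_, ?_, ?_⟩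
  · filter_upwards [hfix] with a ha
    refine ⟨by simp [coeff_harmonic, coeff_one_eq_zero ha], fun n => ?_⟩
    have hn := mode_equation ha rfl n
    simp only [map_smul, smul_apply, smul_eq_mul]
    linear_combination a * hn
  · refine (((isBigO_refl (fun a : ℝ => a) _).smul hu).congr (fun a => ?_) hcube)
    module
  · refine (((isBigO_refl (fun a : ℝ => a) _).mul hspeed).congr (fun a => ?_) hcube)
    ring

end Branch

theorem exists_eval_ne {u : CosineSeries} {n : ℕ} (hn : n ≠ 0) (hu : coeff n u ≠ 0) :
    ∃ z₁ z₂, eval z₁ u ≠ eval z₂ u := by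
  by_contra! hconst
  have heval (z : ℝ) : eval z u = eval z (eval 0 u • harmonic 0) := by
    simpa [eval_harmonic] using hconst z 0
  exact hu (by simpa [coeff_harmonic, hn] using coeff_eq_of_eval_eq heval n)

theorem fcoef_equation_of_mode_equation {m : ℝ → ℝ} (hm : Function.Even m) {k c : ℝ}
    {u : CosineSeries}
    (hu : ∀ n : ℕ, (m (k * n) - c) * coeff n u + coeff n (mul u u) = 0) (n : ℤ) :
    (m (k * n) : ℂ) * fcoef (fun z => eval z u) n - (c : ℂ) * fcoef (fun z => eval z u) n +
      fcoef (fun z => eval z u ^ 2) n = 0 := by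
  have hsymm : m (k * n) = m (k * n.natAbs) := by
    rcases n.natAbs_eq with h | h
    · rw [h, Int.cast_natCast, Int.natAbs_natCast]
    · rw [h, Int.cast_neg, mul_neg, hm, Int.cast_natCast, Int.natAbs_neg, Int.natAbs_natCast]
  have hmode : ((m (k * n.natAbs) : ℂ) - c) * coeff n.natAbs u + coeff n.natAbs (mul u u) = 0 :=
    mod_cast hu n.natAbs
  simp_rw [sq, ← eval_mul, fcoef_eval, hsymm]
  linear_combination (if n = 0 then 1 else 1 / 2 : ℂ) * hmode

end CosineSeries

open CosineSeries

theorem whitham_small_amplitude_existence_general {m : ℝ → ℝ} (hm : Function.Even m) {k δ : ℝ}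
    (hδ : 0 < δ) (hgap : ∀ n : ℕ, n ≠ 1 → δ ≤ |m (k * n) - m k|) :
    ∃ ε > 0, ∃ C > 0, ∃ w : ℝ → ℝ → ℝ, ∃ cs : ℝ → ℝ,
      ∀ a : ℝ, |a| < ε →
        ContDiff ℝ (⊤ : ℕ∞) (w a) ∧
        (∀ z : ℝ, w a (-z) = w a z) ∧
        Function.Periodic (w a) (2 * π) ∧
        (∀ n : ℤ,
          (m (k * (n : ℝ)) : ℂ) * fcoef (w a) n - (cs a : ℂ) * fcoef (w a) n +
            fcoef (fun z => w a z ^ 2) n = 0) ∧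
        (a ≠ 0 → ∃ z₁ z₂ : ℝ, w a z₁ ≠ w a z₂) ∧
        (∀ z : ℝ,
          |w a z - a * cos z -
            a ^ 2 / 2 * (1 / (m k - m 0) + cos (2 * z) / (m k - m (2 * k)))| ≤ C * |a| ^ 3) ∧
        |cs a - m k - a ^ 2 * (1 / (m k - m 0) + 1 / (2 * (m k - m (2 * k))))| ≤ C * |a| ^ 3 := by
  obtain ⟨U, c, hmodes, hU, hc⟩ :=
    exists_travelingWave_branch (μ := fun n => m (k * n)) hδ (by simpa using hgap)
  simp only [Nat.cast_zero, Nat.cast_one, Nat.cast_ofNat, mul_zero, mul_one, mul_comm k 2] at hU hc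
  obtain ⟨C, hC, hO⟩ := (hU.prod_left hc).exists_pos
  obtain ⟨ε, hε, hball⟩ := Metric.eventually_nhds_iff.1 (hmodes.and hO.bound)
  refine ⟨ε, hε, C, hC, fun a z => eval z (U a), c, fun a ha => ?_⟩
  obtain ⟨⟨hcoeff, hmode⟩, hbound⟩ := hball (by simpa using ha)
  rw [norm_pow, norm_eq_abs] at hbound
  refine ⟨contDiff_eval _, even_eval _, periodic_eval _, fcoef_equation_of_mode_equation hm hmode,
    fun ha₀ => exists_eval_ne one_ne_zero (hcoeff.trans_ne ha₀), fun z => ?_, ?_⟩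
  · refine le_trans (le_of_eq_of_le ?_ (abs_eval_le z _)) ((norm_fst_le _).trans hbound)
    simp only [map_sub, map_add, map_smul, eval_harmonic, smul_eq_mul]
    simp [div_eq_mul_inv, mul_comm]
  · refine le_of_eq_of_le ?_ ((norm_snd_le _).trans hbound)
    rw [norm_eq_abs, one_div, one_div, mul_inv_rev, ← div_eq_mul_inv]

/-- existence of small-amplitude periodic traveling waves of the
capillarity-modified Whitham equation in the case `b = 0`, `τ ≥ 1/3`, together with
their small-amplitude asymptotics. -/
theorem whitham_small_amplitude_existence (g d T : ℝ) (hg : 0 < g) (hd : 0 < d)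
    (hT : 0 < T) (hτ : 1 / 3 ≤ T / (g * d ^ 2)) (k : ℝ) (hk : 0 < k) :
    ∃ ε > 0, ∃ C > 0, ∃ w : ℝ → ℝ → ℝ, ∃ cs : ℝ → ℝ,
      ∀ a : ℝ, |a| < ε →
        ContDiff ℝ (⊤ : ℕ∞) (w a) ∧
        (∀ z : ℝ, w a (-z) = w a z) ∧
        Function.Periodic (w a) (2 * Real.pi) ∧
        (∀ n : ℤ,
          (mW g d T (k * (n : ℝ)) : ℂ) * fcoef (w a) n - (cs a : ℂ) * fcoef (w a) n +
            fcoef (fun z => w a z ^ 2) n = 0) ∧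
        (a ≠ 0 → ∃ z₁ z₂ : ℝ, w a z₁ ≠ w a z₂) ∧
        (∀ z : ℝ,
          |w a z - a * Real.cos z -
            a ^ 2 / 2 * (1 / (mW g d T k - mW g d T 0) +
              Real.cos (2 * z) / (mW g d T k - mW g d T (2 * k)))| ≤ C * |a| ^ 3) ∧
        |cs a - mW g d T k -
          a ^ 2 * (1 / (mW g d T k - mW g d T 0) +
            1 / (2 * (mW g d T k - mW g d T (2 * k))))| ≤ C * |a| ^ 3 := by
  have hmono : StrictMono fun n : ℕ => mW g d T (k * n) := fun i j hij =>
    strictMonoOn_mW hg hd hτ (Set.mem_Ici.2 (by positivity)) (Set.mem_Ici.2 (by positivity))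
      (mul_lt_mul_of_pos_left (Nat.cast_lt.2 hij) hk)
  obtain ⟨δ, hδ, hgap⟩ := exists_gap_of_strictMono hmono 0
  exact whitham_small_amplitude_existence_general (mW_even g d T) hδ (by simpa using hgap)
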